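/- For every s with 5/6 < s ≤ 5/4 and every ε with 0 < ε ≤ (6s−5)/2 there exists a constant C = C(s,ε) > 0 such that for all smooth mean-free divergence-free vector fields u, v, w on T³ one has |b(u,v,w)| ≤ C ‖u‖_{H^s} ‖v‖_{H^s} ‖w‖_{H^{s−ε}}, and consequently |b(u,v,w)| ≤ C ‖u‖_{H^s} ‖v‖_{H^s} ‖w‖_{H^s}. -/

import Mathlib

open MeasureTheory

noncomputable section

/-- A vector field on `ℝ³` is `ℤ³`-periodic (i.e. lives on the torus `T³`). -/
def IsPeriodicVF (u : (Fin 3 → ℝ) → (Fin 3 → ℝ)) : Prop :=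
  ∀ (x : Fin 3 → ℝ) (m : Fin 3 → ℤ), u (x + fun i => (m i : ℝ)) = u x

/-- A vector field has zero mean over the fundamental domain `[0,1]³`. -/
def IsMeanFree (u : (Fin 3 → ℝ) → (Fin 3 → ℝ)) : Prop :=
  ∫ x in Set.Icc (0 : Fin 3 → ℝ) 1, u x = 0

/-- A vector field is divergence-free: `∑ i, ∂ᵢ uᵢ = 0`. -/
def IsDivFree (u : (Fin 3 → ℝ) → (Fin 3 → ℝ)) : Prop :=
  ∀ x : Fin 3 → ℝ, ∑ i, fderiv ℝ u x (Pi.single i 1) i = 0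

/-- The `k`-th Fourier coefficient `û(k) = ∫_{[0,1]³} u(x) e^{-2πi k·x} dx` (componentwise). -/
def fourierCoeffVF (u : (Fin 3 → ℝ) → (Fin 3 → ℝ)) (k : Fin 3 → ℤ) : Fin 3 → ℂ :=
  fun j => ∫ x in Set.Icc (0 : Fin 3 → ℝ) 1,
    (u x j : ℂ) * Complex.exp (-(2 * Real.pi * Complex.I) * ∑ i, (k i : ℂ) * (x i : ℂ))

/-- The squared Euclidean length of a Fourier coefficient vector. -/
def fcNormSq (u : (Fin 3 → ℝ) → (Fin 3 → ℝ)) (k : Fin 3 → ℤ) : ℝ :=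
  ∑ j, Complex.normSq (fourierCoeffVF u k j)

/-- The spectral weight `|2πk|^{2s}`. -/
def specWeight (s : ℝ) (k : Fin 3 → ℤ) : ℝ :=
  ((2 * Real.pi) ^ 2 * ∑ i, ((k i : ℝ)) ^ 2) ^ s

/-- The Sobolev `H^s` norm: `‖u‖_{H^s}² = ∑_{k ≠ 0} |2πk|^{2s} |û(k)|²`. -/
def hsNorm (s : ℝ) (u : (Fin 3 → ℝ) → (Fin 3 → ℝ)) : ℝ :=
  Real.sqrt (∑' k : Fin 3 → ℤ, if k = 0 then 0 else specWeight s k * fcNormSq u k)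

/-- The trilinear form `b(u,v,w) = ∑_{i,j} ∫_{[0,1]³} uᵢ (∂ᵢ vⱼ) wⱼ dx`. -/
def bform (u v w : (Fin 3 → ℝ) → (Fin 3 → ℝ)) : ℝ :=
  ∑ i, ∑ j, ∫ x in Set.Icc (0 : Fin 3 → ℝ) 1,
    u x i * fderiv ℝ v x (Pi.single i 1) j * w x j

/-- Smooth, periodic, mean-free vector field on the torus. -/
def IsSmoothTorusVF (u : (Fin 3 → ℝ) → (Fin 3 → ℝ)) : Prop :=
  ContDiff ℝ (⊤ : ℕ∞) u ∧ IsPeriodicVF u ∧ IsMeanFree u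

end

/-!
The Fourier series of smooth fields converge absolutely, and expanding in modes bounds `|b(u,v,w)|`
by a multiple of the sum of `|û(k)| |l| |v̂(l)| |ŵ(m)|` over `k + l + m = 0`. After moving the
Sobolev weights onto the coefficients, the sum carries the weight `|k|^(-α) |l|^(-β) |m|^(-γ)` with
`(α, β, γ) = (s, s - 1, s - ε)`, where each exponent is below `3/2` and `α + β + γ ≥ 3/2`.
In every triple `k + l + m = 0` the two largest frequencies are comparable. If, say, `k` is the
smallest, the weight is therefore at most a multiple of `|k|^(-α) |l|^(α - 3/2)`, whose square,
summed over `0 < |k| ≤ |l|`, is bounded uniformly in `l` because `α < 3/2`. Cauchy–Schwarz then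
leaves the product of the three `ℓ²` norms.
-/

open scoped ENNReal

section PowerSums

lemma sub_one_rpow_add_mul_rpow_le {θ y : ℝ} (hθ₀ : 0 ≤ θ) (hθ₁ : θ ≤ 1) (hy : 1 ≤ y) :
    (y - 1) ^ θ + θ * y ^ (θ - 1) ≤ y ^ θ := by
  have hy₀ : 0 < y := by linarith
  have hinv : y⁻¹ ≤ 1 := inv_le_one_of_one_le₀ hy
  have bernoulli : (1 + -y⁻¹) ^ θ ≤ 1 + θ * -y⁻¹ :=
    rpow_one_add_le_one_add_mul_self (by linarith) hθ₀ hθ₁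
  calc (y - 1) ^ θ + θ * y ^ (θ - 1)
      = y ^ θ * (1 + -y⁻¹) ^ θ + θ * (y ^ θ / y) := by
        rw [← Real.mul_rpow hy₀.le (by linarith), Real.rpow_sub_one hy₀.ne']
        congr 2
        field_simp
        ring
    _ ≤ y ^ θ * (1 + θ * -y⁻¹) + θ * (y ^ θ / y) := by gcongr
    _ = y ^ θ := by ring

lemma sum_range_add_one_rpow_le {θ : ℝ} (hθ₀ : 0 < θ) (hθ₁ : θ ≤ 1) (n : ℕ) :
    ∑ j ∈ Finset.range n, ((j : ℝ) + 1) ^ (θ - 1) ≤ n ^ θ / θ := by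
  have telescope : ∑ j ∈ Finset.range n, (((j + 1 : ℕ) : ℝ) ^ θ - (j : ℝ) ^ θ) = n ^ θ := by
    rw [Finset.sum_range_sub (fun j : ℕ => (j : ℝ) ^ θ)]
    simp [Real.zero_rpow hθ₀.ne']
  rw [le_div_iff₀ hθ₀, Finset.sum_mul, ← telescope]
  refine Finset.sum_le_sum fun j _ => ?_
  have h := sub_one_rpow_add_mul_rpow_le (y := j + 1) hθ₀.le hθ₁ (by simp)
  rw [add_sub_cancel_right] at h
  push_cast
  linarith

lemma sum_Icc_max_one_abs_rpow_le {θ : ℝ} (hθ₀ : 0 < θ) (hθ₁ : θ ≤ 1) {n : ℕ} (hn : 1 ≤ n) :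
    ∑ j ∈ Finset.Icc (-(n : ℤ)) n, max 1 |(j : ℝ)| ^ (θ - 1) ≤ (1 + 2 / θ) * n ^ θ := by
  have heven : Function.Even fun j : ℤ => max 1 |(j : ℝ)| ^ (θ - 1) := fun j => by simp
  have hmax (j : ℕ) : max 1 |(j : ℝ) + 1| = j + 1 := by
    rw [abs_of_nonneg (by positivity)]
    exact max_eq_right (by simp)
  have hone : (1 : ℝ) ≤ n ^ θ := Real.one_le_rpow (by exact_mod_cast hn) hθ₀.le
  have hsum := sum_range_add_one_rpow_le hθ₀ hθ₁ n
  rw [Finset.sum_Icc_of_even_eq_range heven, Finset.sum_range_succ']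
  simp only [Nat.cast_add, Nat.cast_one, Int.cast_add, Int.cast_natCast, Int.cast_one, hmax,
    CharP.cast_eq_zero, Int.cast_zero, abs_zero, zero_le_one, sup_of_le_left, Real.one_rpow,
    nsmul_eq_mul, Nat.cast_ofNat]
  calc _ = 2 * ∑ j ∈ Finset.range n, ((j : ℝ) + 1) ^ (θ - 1) + 1 := by ring
    _ ≤ 2 * (n ^ θ / θ) + n ^ θ := by gcongr
    _ = _ := by ring

end PowerSums

section Lattice

variable {ι : Type*} [Fintype ι]

lemma exists_norm_apply_eq_norm [Nonempty ι] (k : ι → ℤ) : ∃ i, ‖k i‖ = ‖k‖ := by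
  obtain ⟨i, hi⟩ := Finite.exists_max fun i => ‖k i‖
  exact ⟨i, (norm_le_pi_norm k i).antisymm ((pi_norm_le_iff_of_nonneg (norm_nonneg _)).2 hi)⟩

lemma exists_norm_eq_natCast (k : ι → ℤ) : ∃ n : ℕ, ‖k‖ = n := by
  cases isEmpty_or_nonempty ι
  · exact ⟨0, by simp [Subsingleton.elim k 0]⟩
  · obtain ⟨i, hi⟩ := exists_norm_apply_eq_norm k
    exact ⟨(k i).natAbs, by rw [← hi, Int.norm_eq_abs, Nat.cast_natAbs, Int.cast_abs]⟩

lemma one_le_norm_of_ne_zero {k : ι → ℤ} (hk : k ≠ 0) : 1 ≤ ‖k‖ := by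
  obtain ⟨n, hn⟩ := exists_norm_eq_natCast k
  have hpos : 0 < ‖k‖ := norm_pos_iff.2 hk
  rw [hn] at hpos ⊢
  exact_mod_cast hpos

lemma one_le_enorm_of_ne_zero {k : ι → ℤ} (hk : k ≠ 0) : 1 ≤ ‖k‖ₑ := by
  rw [← ofReal_norm, ENNReal.one_le_ofReal]
  exact one_le_norm_of_ne_zero hk

lemma enorm_rpow_eq_ofReal {k : ι → ℤ} (hk : k ≠ 0) (s : ℝ) :
    ‖k‖ₑ ^ s = ENNReal.ofReal (‖k‖ ^ s) := by
  rw [← ofReal_norm, ENNReal.ofReal_rpow_of_pos (norm_pos_iff.2 hk)]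

/-- The nonzero lattice points of sup norm at most `n`, over which the sums bounding
`lowHighKernel` run. -/
noncomputable def puncturedBox (ι : Type*) [Fintype ι] [DecidableEq ι] (n : ℕ) : Finset (ι → ℤ) :=
  (Fintype.piFinset fun _ => Finset.Icc (-(n : ℤ)) n).erase 0

lemma mem_puncturedBox [DecidableEq ι] {n : ℕ} {k : ι → ℤ} :
    k ∈ puncturedBox ι n ↔ k ≠ 0 ∧ ‖k‖ ≤ n := by
  rw [puncturedBox, Finset.mem_erase, Fintype.mem_piFinset,
    pi_norm_le_iff_of_nonneg (by positivity)]
  simp only [Finset.mem_Icc, ← abs_le, Int.norm_eq_abs]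
  norm_cast

/-- The sup norm dominates every `max 1 |kᵢ|`, which factors the sum into one-dimensional ones. -/
lemma exists_sum_puncturedBox_rpow_le_of_nonneg [DecidableEq ι] {r : ℝ} (hr₀ : 0 ≤ r)
    (hr : r < Fintype.card ι) : ∃ C : ℝ, 0 < C ∧ ∀ n : ℕ, 1 ≤ n →
      ∑ k ∈ puncturedBox ι n, ‖k‖ ^ (-r) ≤ C * (n : ℝ) ^ (Fintype.card ι - r) := by
  set d : ℝ := (Fintype.card ι : ℝ)
  have hd₀ : 0 < d := hr₀.trans_lt hr
  set θ := (d - r) / d with hθ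
  have hθ₀ : 0 < θ := div_pos (by linarith) hd₀
  have hθ₁ : θ ≤ 1 := (div_le_one hd₀).2 (by linarith)
  have hpow {x : ℝ} (hx : 0 ≤ x) (e : ℝ) : (x ^ e) ^ Fintype.card ι = x ^ (e * d) := by
    rw [← Real.rpow_mul_natCast hx]
  refine ⟨(1 + 2 / θ) ^ Fintype.card ι, by positivity, fun n hn => ?_⟩
  have hfactor : ∀ k ∈ puncturedBox ι n, ‖k‖ ^ (-r) ≤ ∏ i, max 1 |(k i : ℝ)| ^ (θ - 1) := by
    intro k hk
    have hk₁ := one_le_norm_of_ne_zero (mem_puncturedBox.1 hk).1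
    calc ‖k‖ ^ (-r) = ∏ _i : ι, ‖k‖ ^ (θ - 1) := by
          rw [Finset.prod_const, Finset.card_univ, hpow (norm_nonneg k), hθ]
          congr 1
          field_simp
          ring
      _ ≤ _ := Finset.prod_le_prod (fun _ _ => by positivity) fun i _ =>
          Real.rpow_le_rpow_of_nonpos (by positivity)
            (max_le hk₁ (Int.norm_eq_abs (k i) ▸ norm_le_pi_norm k i)) (by linarith)
  calc ∑ k ∈ puncturedBox ι n, ‖k‖ ^ (-r)
      ≤ ∑ k ∈ puncturedBox ι n, ∏ i, max 1 |(k i : ℝ)| ^ (θ - 1) := Finset.sum_le_sum hfactor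
    _ ≤ ∑ k ∈ Fintype.piFinset fun _ : ι => Finset.Icc (-(n : ℤ)) n,
          ∏ i, max 1 |(k i : ℝ)| ^ (θ - 1) :=
        Finset.sum_le_sum_of_subset_of_nonneg (Finset.erase_subset _ _) fun _ _ _ => by positivity
    _ = (∑ j ∈ Finset.Icc (-(n : ℤ)) n, max 1 |(j : ℝ)| ^ (θ - 1)) ^ Fintype.card ι := by
        rw [← Finset.prod_univ_sum (fun _ : ι => Finset.Icc (-(n : ℤ)) n)
          (fun _ j => max 1 |(j : ℝ)| ^ (θ - 1)), Finset.prod_const, Finset.card_univ]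
    _ ≤ ((1 + 2 / θ) * n ^ θ) ^ Fintype.card ι := by
        gcongr
        exact sum_Icc_max_one_abs_rpow_le hθ₀ hθ₁ hn
    _ = _ := by
        rw [mul_pow, hpow n.cast_nonneg, hθ, div_mul_cancel₀ _ hd₀.ne']

lemma exists_sum_puncturedBox_rpow_le [DecidableEq ι] [Nonempty ι] {r : ℝ}
    (hr : r < Fintype.card ι) : ∃ C : ℝ, 0 < C ∧ ∀ n : ℕ, 1 ≤ n →
      ∑ k ∈ puncturedBox ι n, ‖k‖ ^ (-r) ≤ C * (n : ℝ) ^ (Fintype.card ι - r) := by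
  rcases le_or_gt 0 r with hr₀ | hr₀
  · exact exists_sum_puncturedBox_rpow_le_of_nonneg hr₀ hr
  obtain ⟨C, hC, hsum⟩ := exists_sum_puncturedBox_rpow_le_of_nonneg (ι := ι) le_rfl
    (by exact_mod_cast Fintype.card_pos)
  refine ⟨C, hC, fun n hn => ?_⟩
  have hn₀ : (0 : ℝ) < n := by exact_mod_cast hn
  calc ∑ k ∈ puncturedBox ι n, ‖k‖ ^ (-r)
      ≤ ∑ k ∈ puncturedBox ι n, ‖k‖ ^ (-0 : ℝ) * (n : ℝ) ^ (-r) := by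
        refine Finset.sum_le_sum fun k hk => ?_
        rw [neg_zero, Real.rpow_zero, one_mul]
        exact Real.rpow_le_rpow (norm_nonneg k) (mem_puncturedBox.1 hk).2 (by linarith)
    _ ≤ C * (n : ℝ) ^ (Fintype.card ι - 0 : ℝ) * (n : ℝ) ^ (-r) := by
        rw [← Finset.sum_mul]
        gcongr
        exact hsum n hn
    _ = C * (n : ℝ) ^ (Fintype.card ι - r) := by
        rw [mul_assoc, ← Real.rpow_add hn₀, sub_zero, sub_eq_add_neg]

/-- The `ℓ²` norm of a nonnegative family, possibly infinite. -/
noncomputable def ell2Norm {α : Type*} (f : α → ℝ≥0∞) : ℝ≥0∞ := (∑' i, f i ^ 2) ^ (1 / 2 : ℝ)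

lemma tsum_mul_le_ell2Norm_mul_ell2Norm {α : Type*} (f g : α → ℝ≥0∞) :
    ∑' i, f i * g i ≤ ell2Norm f * ell2Norm g := by
  rw [ENNReal.tsum_eq_iSup_sum]
  refine iSup_le fun S => (ENNReal.inner_le_Lp_mul_Lq S f g .two_two).trans ?_
  simp only [ENNReal.rpow_ofNat]
  exact mul_le_mul' (ENNReal.rpow_le_rpow (ENNReal.sum_le_tsum S) (by norm_num))
    (ENNReal.rpow_le_rpow (ENNReal.sum_le_tsum S) (by norm_num))

/-- The kernel of the low-high interactions: the weight `‖x‖^(-p) ‖y‖^(p - d/2)`, homogeneous of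
degree `-d/2`, restricted to nonzero `x` with `‖x‖ ≤ ‖y‖`. -/
noncomputable def lowHighKernel (p : ℝ) (x y : ι → ℤ) : ℝ≥0∞ :=
  open scoped Classical in
  if x ≠ 0 ∧ ‖x‖ ≤ ‖y‖ then ‖x‖ₑ ^ (-p) * ‖y‖ₑ ^ (p - Fintype.card ι / 2) else 0

lemma lowHighKernel_of_le {p : ℝ} {x y : ι → ℤ} (hx : x ≠ 0) (hxy : ‖x‖ ≤ ‖y‖) :
    lowHighKernel p x y = ‖x‖ₑ ^ (-p) * ‖y‖ₑ ^ (p - Fintype.card ι / 2) :=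
  if_pos ⟨hx, hxy⟩

lemma lowHighKernel_sq_of_le {p : ℝ} {x y : ι → ℤ} (hx : x ≠ 0) (hxy : ‖x‖ ≤ ‖y‖) :
    lowHighKernel p x y ^ 2 =
      ENNReal.ofReal (‖x‖ ^ (-(2 * p)) * ‖y‖ ^ (-(Fintype.card ι - 2 * p))) := by
  have hy : y ≠ 0 := norm_pos_iff.1 ((norm_pos_iff.2 hx).trans_le hxy)
  rw [lowHighKernel_of_le hx hxy, enorm_rpow_eq_ofReal hx, enorm_rpow_eq_ofReal hy,
    ← ENNReal.ofReal_mul (by positivity), ← ENNReal.ofReal_pow (by positivity), mul_pow,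
    ← Real.rpow_mul_natCast (norm_nonneg x), ← Real.rpow_mul_natCast (norm_nonneg y)]
  congr 3 <;> push_cast <;> ring

lemma exists_tsum_lowHighKernel_sq_le [Nonempty ι] {p : ℝ} (hp : p < Fintype.card ι / 2) :
    ∃ C : ℝ≥0∞, C ≠ ∞ ∧ ∀ y : ι → ℤ, ∑' x, lowHighKernel p x y ^ 2 ≤ C := by
  classical
  obtain ⟨C, hC, hsum⟩ := exists_sum_puncturedBox_rpow_le (ι := ι) (r := 2 * p) (by linarith)
  refine ⟨ENNReal.ofReal C, ENNReal.ofReal_ne_top, fun y => ?_⟩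
  obtain ⟨n, hn⟩ := exists_norm_eq_natCast y
  have hsupp : ∀ x ∉ puncturedBox ι n, lowHighKernel p x y ^ 2 = 0 := fun x hx => by
    rw [mem_puncturedBox, ← hn] at hx
    rw [lowHighKernel, if_neg hx, zero_pow two_ne_zero]
  have hterm : ∀ x ∈ puncturedBox ι n, lowHighKernel p x y ^ 2 =
      ENNReal.ofReal (‖x‖ ^ (-(2 * p)) * (n : ℝ) ^ (-(Fintype.card ι - 2 * p))) := fun x hx => by
    rw [mem_puncturedBox, ← hn] at hx
    rw [lowHighKernel_sq_of_le hx.1 hx.2, hn]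
  rw [tsum_eq_sum hsupp, Finset.sum_congr rfl hterm,
    ← ENNReal.ofReal_sum_of_nonneg fun _ _ => by positivity, ← Finset.sum_mul]
  refine ENNReal.ofReal_le_ofReal ?_
  rcases Nat.eq_zero_or_pos n with rfl | hn₁
  · have hempty : puncturedBox ι 0 = ∅ := Finset.eq_empty_of_forall_notMem fun x hx => by
      rw [mem_puncturedBox, Nat.cast_zero, norm_le_zero_iff] at hx
      exact hx.1 hx.2
    simpa [hempty] using hC.le
  have hn₀ : (0 : ℝ) < n := by exact_mod_cast hn₁
  calc _ ≤ C * (n : ℝ) ^ (Fintype.card ι - 2 * p) * (n : ℝ) ^ (-(Fintype.card ι - 2 * p)) := by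
        gcongr
        exact hsum n hn₁
    _ = C := by rw [mul_assoc, ← Real.rpow_add hn₀, add_neg_cancel, Real.rpow_zero, mul_one]

section ZeroSum

variable {G : Type*} [AddCommGroup G]

lemma tsum_zeroSum_swap (F : G → G → G → ℝ≥0∞) :
    ∑' k, ∑' l, F l k (-(k + l)) = ∑' k, ∑' l, F k l (-(k + l)) := by
  rw [ENNReal.tsum_comm]
  simp only [add_comm]

lemma tsum_neg_add (k : G) (f : G → ℝ≥0∞) : ∑' l, f (-(k + l)) = ∑' l, f l :=
  ((Equiv.addLeft k).trans (Equiv.neg G)).tsum_eq f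

lemma tsum_zeroSum_rotate (F : G → G → G → ℝ≥0∞) :
    ∑' k, ∑' l, F (-(k + l)) k l = ∑' k, ∑' l, F k l (-(k + l)) := by
  rw [ENNReal.tsum_comm (f := fun k l => F k l (-(k + l)))]
  refine tsum_congr fun k => ?_
  rw [← tsum_neg_add k fun l => F l k (-(l + k))]
  refine tsum_congr fun l => ?_
  congr 1
  abel

end ZeroSum

/-- Cauchy–Schwarz in `(k, l)`, pairing `f k * h (-(k + l))` with `g l * lowHighKernel p k l`. -/
lemma exists_tsum_lowHighKernel_le [Nonempty ι] {p : ℝ} (hp : p < Fintype.card ι / 2) :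
    ∃ C : ℝ≥0∞, C ≠ ∞ ∧ ∀ f g h : (ι → ℤ) → ℝ≥0∞,
      ∑' k, ∑' l, f k * g l * h (-(k + l)) * lowHighKernel p k l ≤
        C * (ell2Norm f * ell2Norm g * ell2Norm h) := by
  obtain ⟨C, hC, hrow⟩ := exists_tsum_lowHighKernel_sq_le hp
  refine ⟨C ^ (1 / 2 : ℝ), ENNReal.rpow_ne_top_of_nonneg (by norm_num) hC, fun f g h => ?_⟩
  have hfh : ell2Norm (fun z : (ι → ℤ) × (ι → ℤ) => f z.1 * h (-(z.1 + z.2))) =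
      ell2Norm f * ell2Norm h := by
    simp only [ell2Norm, mul_pow]
    rw [← ENNReal.mul_rpow_of_nonneg _ _ (by norm_num), ENNReal.tsum_prod',
      ← ENNReal.tsum_mul_right]
    simp only [ENNReal.tsum_mul_left, tsum_neg_add _ fun m => h m ^ 2]
  have hgK : ell2Norm (fun z : (ι → ℤ) × (ι → ℤ) => g z.2 * lowHighKernel p z.1 z.2) ≤
      ell2Norm g * C ^ (1 / 2 : ℝ) := by
    simp only [ell2Norm, mul_pow]
    rw [← ENNReal.mul_rpow_of_nonneg _ _ (by norm_num), ENNReal.tsum_prod', ENNReal.tsum_comm,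
      ← ENNReal.tsum_mul_right]
    simp only [ENNReal.tsum_mul_left]
    gcongr with l
    exact hrow l
  calc ∑' k, ∑' l, f k * g l * h (-(k + l)) * lowHighKernel p k l
      = ∑' z : (ι → ℤ) × (ι → ℤ), f z.1 * h (-(z.1 + z.2)) *
          (g z.2 * lowHighKernel p z.1 z.2) := by
        rw [ENNReal.tsum_prod']
        exact tsum_congr fun k => tsum_congr fun l => by ring
    _ ≤ ell2Norm f * ell2Norm h * (ell2Norm g * C ^ (1 / 2 : ℝ)) :=
        (tsum_mul_le_ell2Norm_mul_ell2Norm _ _).trans (by rw [hfh]; gcongr)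
    _ = C ^ (1 / 2 : ℝ) * (ell2Norm f * ell2Norm g * ell2Norm h) := by ring

lemma rpow_le_mul_rpow_of_comparable {c x y : ℝ≥0∞} (hc₀ : c ≠ 0) (hc : c ≠ ∞)
    (hxy : x ≤ c * y) (hyx : y ≤ c * x) (r : ℝ) : x ^ r ≤ c ^ |r| * y ^ r := by
  rcases le_or_gt 0 r with hr | hr
  · rw [abs_of_nonneg hr, ← ENNReal.mul_rpow_of_nonneg _ _ hr]
    gcongr
  · have hr' : 0 ≤ -r := by linarith
    have hpow : y ^ (-r) ≤ c ^ (-r) * x ^ (-r) := by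
      rw [← ENNReal.mul_rpow_of_nonneg _ _ hr']
      gcongr
    calc x ^ r = (x ^ (-r))⁻¹ := by rw [ENNReal.rpow_neg, inv_inv]
      _ ≤ (y ^ (-r) / c ^ (-r))⁻¹ := ENNReal.inv_le_inv.2 (ENNReal.div_le_of_le_mul' hpow)
      _ = c ^ |r| * y ^ r := by
        rw [ENNReal.inv_div (.inl (ENNReal.rpow_ne_top_of_nonneg hr' hc))
          (.inl (ENNReal.rpow_pos (pos_iff_ne_zero.2 hc₀) hc).ne'), abs_of_neg hr, div_eq_mul_inv,
          ← ENNReal.rpow_neg, neg_neg]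

lemma enorm_le_two_mul_enorm {E : Type*} [NormedAddCommGroup E] {k l m : E}
    (hklm : k + l + m = 0) (hkl : ‖k‖ ≤ ‖l‖) : ‖m‖ₑ ≤ 2 * ‖l‖ₑ := calc
  ‖m‖ₑ = ‖-(k + l)‖ₑ := by rw [← eq_neg_of_add_eq_zero_right hklm]
  _ ≤ ‖k‖ₑ + ‖l‖ₑ := by rw [enorm_neg]; exact enorm_add_le k l
  _ ≤ 2 * ‖l‖ₑ := by rw [two_mul]; gcongr; exact enorm_le_iff_norm_le.2 hkl

lemma rpow_mul_rpow_mul_rpow_le_lowHighKernel {α β γ : ℝ}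
    (hαβγ : (Fintype.card ι : ℝ) / 2 ≤ α + β + γ) {k l m : ι → ℤ} (hk : k ≠ 0)
    (hklm : k + l + m = 0) (hkl : ‖k‖ ≤ ‖l‖) (hkm : ‖k‖ ≤ ‖m‖) :
    ‖k‖ₑ ^ (-α) * ‖l‖ₑ ^ (-β) * ‖m‖ₑ ^ (-γ) ≤ 2 ^ |γ| * lowHighKernel α k l := by
  have hl : l ≠ 0 := norm_pos_iff.1 ((norm_pos_iff.2 hk).trans_le hkl)
  have hl₀ : ‖l‖ₑ ≠ 0 := by simpa using hl
  have hlm : ‖l‖ₑ ≤ 2 * ‖m‖ₑ := enorm_le_two_mul_enorm (by rw [← hklm]; abel) hkm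
  have hml : ‖m‖ₑ ≤ 2 * ‖l‖ₑ := enorm_le_two_mul_enorm hklm hkl
  calc ‖k‖ₑ ^ (-α) * ‖l‖ₑ ^ (-β) * ‖m‖ₑ ^ (-γ)
      ≤ ‖k‖ₑ ^ (-α) * ‖l‖ₑ ^ (-β) * (2 ^ |γ| * ‖l‖ₑ ^ (-γ)) := by
        gcongr
        simpa using rpow_le_mul_rpow_of_comparable two_ne_zero ENNReal.ofNat_ne_top hml hlm (-γ)
    _ = 2 ^ |γ| * (‖k‖ₑ ^ (-α) * ‖l‖ₑ ^ (-β + -γ)) := by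
        rw [ENNReal.rpow_add _ _ hl₀ enorm_ne_top]
        ring
    _ ≤ 2 ^ |γ| * (‖k‖ₑ ^ (-α) * ‖l‖ₑ ^ (α - Fintype.card ι / 2)) := by
        gcongr
        · exact one_le_enorm_of_ne_zero hl
        · linarith
    _ = 2 ^ |γ| * lowHighKernel α k l := by rw [lowHighKernel_of_le hk hkl]

/-- The two largest norms are comparable, so the weight is governed by the kernel attached to the
smallest frequency. -/
lemma rpow_mul_rpow_mul_rpow_le_sum_lowHighKernel {α β γ : ℝ}
    (hαβγ : (Fintype.card ι : ℝ) / 2 ≤ α + β + γ) {k l m : ι → ℤ} (hk : k ≠ 0) (hl : l ≠ 0)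
    (hm : m ≠ 0) (hklm : k + l + m = 0) :
    ‖k‖ₑ ^ (-α) * ‖l‖ₑ ^ (-β) * ‖m‖ₑ ^ (-γ) ≤ (2 ^ |β| + 2 ^ |γ|) *
      (lowHighKernel α k l + lowHighKernel β l k + lowHighKernel γ m k) := by
  have hmin : (‖k‖ ≤ ‖l‖ ∧ ‖k‖ ≤ ‖m‖) ∨ (‖l‖ ≤ ‖k‖ ∧ ‖l‖ ≤ ‖m‖) ∨ ‖m‖ ≤ ‖k‖ ∧ ‖m‖ ≤ ‖l‖ := by
    grind
  rcases hmin with ⟨hkl, hkm⟩ | ⟨hlk, hlm⟩ | ⟨hmk, hml⟩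
  · calc _ ≤ 2 ^ |γ| * lowHighKernel α k l :=
          rpow_mul_rpow_mul_rpow_le_lowHighKernel hαβγ hk hklm hkl hkm
      _ ≤ _ := mul_le_mul' le_add_self (le_add_right le_self_add)
  · calc _ = ‖l‖ₑ ^ (-β) * ‖k‖ₑ ^ (-α) * ‖m‖ₑ ^ (-γ) := by ring
      _ ≤ 2 ^ |γ| * lowHighKernel β l k :=
          rpow_mul_rpow_mul_rpow_le_lowHighKernel (by linarith) hl (by rw [← hklm]; abel) hlk hlm
      _ ≤ _ := mul_le_mul' le_add_self (le_add_right le_add_self)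
  · calc _ = ‖m‖ₑ ^ (-γ) * ‖k‖ₑ ^ (-α) * ‖l‖ₑ ^ (-β) := by ring
      _ ≤ 2 ^ |β| * lowHighKernel γ m k :=
          rpow_mul_rpow_mul_rpow_le_lowHighKernel (by linarith) hm (by rw [← hklm]; abel) hmk hml
      _ ≤ _ := mul_le_mul' le_self_add le_add_self

/-- The homogeneous Sobolev norm of order `s`, possibly infinite, of a family of amplitudes on the
lattice: the amplitudes are moduli of Fourier coefficients at nonzero frequencies. The sup norm of
the frequency replaces the Euclidean one. -/
noncomputable def seqSobolevNorm (s : ℝ) (a : (ι → ℤ) → ℝ≥0∞) : ℝ≥0∞ :=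
  ell2Norm fun k => ‖k‖ₑ ^ s * a k

lemma eq_rpow_neg_mul {k : ι → ℤ} (hk : k ≠ 0) (s : ℝ) (x : ℝ≥0∞) :
    x = ‖k‖ₑ ^ (-s) * (‖k‖ₑ ^ s * x) := by
  rw [← mul_assoc, ← ENNReal.rpow_add _ _ (by simpa using hk) enorm_ne_top, neg_add_cancel,
    ENNReal.rpow_zero, one_mul]

lemma mul_mul_le_sum_lowHighKernel {α β γ : ℝ}
    (hαβγ : (Fintype.card ι : ℝ) / 2 ≤ α + β + γ) {a b c : (ι → ℤ) → ℝ≥0∞} (ha : a 0 = 0)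
    (hb : b 0 = 0) (hc : c 0 = 0) {k l m : ι → ℤ} (hklm : k + l + m = 0) :
    a k * b l * c m ≤ (2 ^ |β| + 2 ^ |γ|) *
      ((‖k‖ₑ ^ α * a k) * (‖l‖ₑ ^ β * b l) * (‖m‖ₑ ^ γ * c m) *
        (lowHighKernel α k l + lowHighKernel β l k + lowHighKernel γ m k)) := by
  rcases eq_or_ne k 0 with rfl | hk
  · simp [ha]
  rcases eq_or_ne l 0 with rfl | hl
  · simp [hb]
  rcases eq_or_ne m 0 with rfl | hm
  · simp [hc]
  calc a k * b l * c m
      = (‖k‖ₑ ^ α * a k) * (‖l‖ₑ ^ β * b l) * (‖m‖ₑ ^ γ * c m) *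
          (‖k‖ₑ ^ (-α) * ‖l‖ₑ ^ (-β) * ‖m‖ₑ ^ (-γ)) := by
        conv_lhs => rw [eq_rpow_neg_mul hk α (a k), eq_rpow_neg_mul hl β (b l),
          eq_rpow_neg_mul hm γ (c m)]
        ring
    _ ≤ (‖k‖ₑ ^ α * a k) * (‖l‖ₑ ^ β * b l) * (‖m‖ₑ ^ γ * c m) * ((2 ^ |β| + 2 ^ |γ|) *
          (lowHighKernel α k l + lowHighKernel β l k + lowHighKernel γ m k)) :=
        mul_le_mul_right (rpow_mul_rpow_mul_rpow_le_sum_lowHighKernel hαβγ hk hl hm hklm) _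
    _ = _ := by ring

lemma seqSobolevNorm_enorm_mul {a : (ι → ℤ) → ℝ≥0∞} (ha : a 0 = 0) (s : ℝ) :
    seqSobolevNorm (s - 1) (fun k => ‖k‖ₑ * a k) = seqSobolevNorm s a := by
  unfold seqSobolevNorm
  congr 1 with k
  rcases eq_or_ne k 0 with rfl | hk
  · simp [ha]
  · have hk₀ : ‖k‖ₑ ≠ 0 := by simpa using hk
    rw [← mul_assoc, ENNReal.rpow_sub _ _ hk₀ enorm_ne_top, ENNReal.rpow_one,
      ENNReal.div_mul_cancel hk₀ enorm_ne_top]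

theorem exists_tsum_mul_mul_le_seqSobolevNorm [Nonempty ι] {α β γ : ℝ}
    (hα : α < Fintype.card ι / 2) (hβ : β < Fintype.card ι / 2) (hγ : γ < Fintype.card ι / 2)
    (hαβγ : (Fintype.card ι : ℝ) / 2 ≤ α + β + γ) :
    ∃ C : ℝ≥0∞, C ≠ ∞ ∧ ∀ a b c : (ι → ℤ) → ℝ≥0∞, a 0 = 0 → b 0 = 0 → c 0 = 0 →
      ∑' k, ∑' l, a k * b l * c (-(k + l)) ≤
        C * (seqSobolevNorm α a * seqSobolevNorm β b * seqSobolevNorm γ c) := by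
  obtain ⟨C₁, hC₁, h₁⟩ := exists_tsum_lowHighKernel_le hα
  obtain ⟨C₂, hC₂, h₂⟩ := exists_tsum_lowHighKernel_le hβ
  obtain ⟨C₃, hC₃, h₃⟩ := exists_tsum_lowHighKernel_le hγ
  refine ⟨(2 ^ |β| + 2 ^ |γ|) * (C₁ + C₂ + C₃), by finiteness, fun a b c ha hb hc => ?_⟩
  set f := fun k => ‖k‖ₑ ^ α * a k
  set g := fun k => ‖k‖ₑ ^ β * b k
  set h := fun k => ‖k‖ₑ ^ γ * c k
  have hswap : ∑' k, ∑' l, f k * g l * h (-(k + l)) * lowHighKernel β l k ≤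
      C₂ * (ell2Norm g * ell2Norm f * ell2Norm h) := by
    refine (h₂ g f h).trans_eq' ?_
    simp only [← tsum_zeroSum_swap fun k l m => g k * f l * h m * lowHighKernel β k l,
      mul_comm (f _)]
  have hrotate : ∑' k, ∑' l, f k * g l * h (-(k + l)) * lowHighKernel γ (-(k + l)) k ≤
      C₃ * (ell2Norm h * ell2Norm f * ell2Norm g) := by
    refine (h₃ h f g).trans_eq' ?_
    rw [← tsum_zeroSum_rotate fun k l m => h k * f l * g m * lowHighKernel γ k l]
    simp only [mul_comm (h _), mul_right_comm (f _)]
  calc ∑' k, ∑' l, a k * b l * c (-(k + l))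
      ≤ ∑' k, ∑' l, (2 ^ |β| + 2 ^ |γ|) * (f k * g l * h (-(k + l)) * (lowHighKernel α k l +
          lowHighKernel β l k + lowHighKernel γ (-(k + l)) k)) :=
        ENNReal.tsum_le_tsum fun k => ENNReal.tsum_le_tsum fun l =>
          mul_mul_le_sum_lowHighKernel hαβγ ha hb hc (add_neg_cancel (k + l))
    _ = (2 ^ |β| + 2 ^ |γ|) * (∑' k, ∑' l, f k * g l * h (-(k + l)) * lowHighKernel α k l +
          ∑' k, ∑' l, f k * g l * h (-(k + l)) * lowHighKernel β l k +
          ∑' k, ∑' l, f k * g l * h (-(k + l)) * lowHighKernel γ (-(k + l)) k) := by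
        simp only [ENNReal.tsum_mul_left, mul_add, ENNReal.tsum_add]
    _ ≤ (2 ^ |β| + 2 ^ |γ|) * (C₁ * (ell2Norm f * ell2Norm g * ell2Norm h) +
          C₂ * (ell2Norm g * ell2Norm f * ell2Norm h) +
          C₃ * (ell2Norm h * ell2Norm f * ell2Norm g)) := by
        gcongr
        exact h₁ f g h
    _ = _ := by
        simp only [seqSobolevNorm]
        ring

lemma summable_norm_inv_pow_of_card_lt {m : ℕ} (hm : Fintype.card ι < m) :
    Summable fun k : ι → ℤ => ‖k‖⁻¹ ^ m := by
  let L := Submodule.span ℤ (Set.range (Pi.basisFun ℝ ι))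
  have hrank : Module.finrank ℤ L = Fintype.card ι := by rw [ZLattice.rank ℝ L]; simp
  let toLattice (k : ι → ℤ) : L := ⟨fun i => (k i : ℝ), by
    rw [Module.Basis.mem_span_iff_repr_mem]
    simp⟩
  have hinj : Function.Injective toLattice := fun k l hkl => funext fun i => by
    simpa [toLattice] using congrFun (congrArg Subtype.val hkl) i
  have hsummable : Summable fun z : L => ‖z‖⁻¹ ^ m :=
    ZLattice.summable_norm_pow_inv L m (hrank.trans_lt hm)
  exact (hsummable.comp_injective hinj).congr fun k => rfl

end Lattice

section Fourier

variable {n : ℕ}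

/-- Smooth complex-valued functions on the torus `(ℝ/ℤ)ⁿ`, encoded as `ℤⁿ`-periodic functions on
`ℝⁿ`. -/
structure SmoothPeriodic (f : (Fin n → ℝ) → ℂ) : Prop where
  contDiff : ContDiff ℝ (⊤ : ℕ∞) f
  periodic : ∀ m : Fin n → ℤ, Function.Periodic f fun i => (m i : ℝ)

/-- The character `x ↦ exp(2πi k·x)` of the torus, as a function on `ℝⁿ`. -/
noncomputable def torusChar (k : Fin n → ℤ) (x : Fin n → ℝ) : ℂ :=
  Complex.exp ((2 * Real.pi * Complex.I) * ∑ i, (k i : ℂ) * (x i : ℂ))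

/-- The Fourier coefficient `f̂(k)` of a periodic function, computed on the fundamental domain
`[0,1]ⁿ`. -/
noncomputable def cubeFourierCoeff (f : (Fin n → ℝ) → ℂ) (k : Fin n → ℤ) : ℂ :=
  ∫ x in Set.Icc (0 : Fin n → ℝ) 1, f x * torusChar (-k) x

/-- The partial derivative `∂ᵢf`. -/
noncomputable def partialDeriv (i : Fin n) (f : (Fin n → ℝ) → ℂ) (x : Fin n → ℝ) : ℂ :=
  fderiv ℝ f x (Pi.single i 1)

lemma torusChar_add (k l : Fin n → ℤ) (x : Fin n → ℝ) :
    torusChar (k + l) x = torusChar k x * torusChar l x := by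
  simp only [torusChar, ← Complex.exp_add, ← mul_add, ← Finset.sum_add_distrib, Pi.add_apply,
    Int.cast_add, add_mul]

lemma norm_torusChar (k : Fin n → ℤ) (x : Fin n → ℝ) : ‖torusChar k x‖ = 1 := by
  have hreal : (2 * Real.pi * Complex.I) * ∑ i, (k i : ℂ) * (x i : ℂ) =
      ((2 * Real.pi * ∑ i, (k i : ℝ) * x i : ℝ) : ℂ) * Complex.I := by
    push_cast
    ring
  rw [torusChar, hreal, Complex.norm_exp_ofReal_mul_I]

lemma smoothPeriodic_torusChar (k : Fin n → ℤ) : SmoothPeriodic (torusChar k) where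
  contDiff := by
    have hcoord (i : Fin n) : ContDiff ℝ (⊤ : ℕ∞) fun x : Fin n → ℝ => (x i : ℂ) :=
      Complex.ofRealCLM.contDiff.comp (contDiff_apply ℝ ℝ i)
    exact (contDiff_const.mul (ContDiff.sum fun i _ => contDiff_const.mul (hcoord i))).cexp
  periodic m x := by
    refine Complex.exp_eq_exp_iff_exists_int.2 ⟨∑ i, k i * m i, ?_⟩
    push_cast [Pi.add_apply, mul_add, Finset.sum_add_distrib]
    ring

lemma partialDeriv_torusChar (i : Fin n) (k : Fin n → ℤ) (x : Fin n → ℝ) :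
    partialDeriv i (torusChar k) x = 2 * Real.pi * Complex.I * k i * torusChar k x := by
  have hcoord (j : Fin n) : HasFDerivAt (fun y : Fin n → ℝ => (y j : ℂ))
      (Complex.ofRealCLM.comp (ContinuousLinearMap.proj j)) x :=
    Complex.ofRealCLM.hasFDerivAt.comp x (hasFDerivAt_apply j x)
  have hderiv := ((HasFDerivAt.fun_sum fun j (_ : j ∈ Finset.univ) =>
    (hcoord j).const_mul (k j : ℂ)).const_mul (2 * Real.pi * Complex.I)).cexp
  have hsingle : ∑ j, (k j : ℂ) * ((Pi.single i (1 : ℝ) : Fin n → ℝ) j : ℂ) = k i := by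
    rw [Finset.sum_eq_single i (fun j _ hj => by simp [hj]) (by simp)]
    simp
  rw [partialDeriv, HasFDerivAt.fderiv (f := torusChar k) hderiv]
  simp [hsingle, torusChar]
  ring

namespace SmoothPeriodic

variable {f g : (Fin n → ℝ) → ℂ}

lemma mul (hf : SmoothPeriodic f) (hg : SmoothPeriodic g) :
    SmoothPeriodic fun x => f x * g x where
  contDiff := hf.contDiff.mul hg.contDiff
  periodic m := (hf.periodic m).mul (hg.periodic m)

lemma partialDeriv (hf : SmoothPeriodic f) (i : Fin n) : SmoothPeriodic (partialDeriv i f) where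
  contDiff := (hf.contDiff.fderiv_right (m := (⊤ : ℕ∞)) (by simp)).clm_apply contDiff_const
  periodic m x := by
    have hshift : (fun y => f (y + fun i => (m i : ℝ))) = f := funext (hf.periodic m)
    simp only [_root_.partialDeriv, ← fderiv_comp_add_right, hshift]

lemma iterate_partialDeriv (hf : SmoothPeriodic f) (i : Fin n) (m : ℕ) :
    SmoothPeriodic ((_root_.partialDeriv i)^[m] f) := by
  induction m with
  | zero => exact hf
  | succ m ih => rw [Function.iterate_succ_apply']; exact ih.partialDeriv i

lemma differentiable (hf : SmoothPeriodic f) : Differentiable ℝ f :=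
  hf.contDiff.differentiable (by simp)

end SmoothPeriodic

lemma integrableOn_unitCube {f : (Fin n → ℝ) → ℂ} (hf : Continuous f) :
    IntegrableOn f (Set.Icc 0 1) :=
  hf.continuousOn.integrableOn_compact isCompact_Icc

/-- By the divergence theorem, only the two faces orthogonal to the `i`-th axis contribute, and
these cancel by periodicity. -/
lemma integral_partialDeriv_eq_zero {f : (Fin n → ℝ) → ℂ} (hf : SmoothPeriodic f) (i : Fin n) :
    ∫ x in Set.Icc (0 : Fin n → ℝ) 1, partialDeriv i f x = 0 := by
  obtain _ | n := n
  · exact i.elim0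
  have hdiv (x : Fin (n + 1) → ℝ) :
      ∑ j, (if j = i then fderiv ℝ f x else 0) (Pi.single j 1) = partialDeriv i f x := by
    rw [Finset.sum_eq_single i (fun j _ hj => by simp [hj]) (by simp)]
    simp [partialDeriv]
  have hfaces := integral_divergence_of_hasFDerivAt_off_countable' (0 : Fin (n + 1) → ℝ) 1
    zero_le_one (fun j => if j = i then f else 0) (fun j x => if j = i then fderiv ℝ f x else 0) ∅
    Set.countable_empty
    (fun j => by
      split_ifs
      exacts [hf.contDiff.continuous.continuousOn, continuousOn_const])
    (fun x _ j => by
      split_ifs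
      exacts [(hf.differentiable x).hasFDerivAt, hasFDerivAt_const _ _])
    (by
      simp only [hdiv]
      exact integrableOn_unitCube (hf.partialDeriv i).contDiff.continuous)
  simp only [hdiv] at hfaces
  rw [hfaces]
  refine Finset.sum_eq_zero fun j _ => ?_
  split_ifs with hj
  · rw [sub_eq_zero]
    refine integral_congr_ae (.of_forall fun x => ?_)
    have hface : (j.insertNth 1 x : Fin (n + 1) → ℝ) =
        j.insertNth 0 x + fun l => ((Pi.single j 1 : Fin (n + 1) → ℤ) l : ℝ) := by
      ext l
      refine Fin.succAboveCases j ?_ (fun l => ?_) l <;> simp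
    simp only [Pi.one_apply, Pi.zero_apply, hface, hf.periodic _ _]
  · simp

lemma cubeFourierCoeff_partialDeriv {f : (Fin n → ℝ) → ℂ} (hf : SmoothPeriodic f) (i : Fin n)
    (k : Fin n → ℤ) :
    cubeFourierCoeff (partialDeriv i f) k =
      2 * Real.pi * Complex.I * k i * cubeFourierCoeff f k := by
  have hchar := smoothPeriodic_torusChar (-k)
  have hleibniz (x : Fin n → ℝ) : partialDeriv i (fun y => f y * torusChar (-k) y) x =
      partialDeriv i f x * torusChar (-k) x -
        2 * Real.pi * Complex.I * k i * (f x * torusChar (-k) x) := by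
    have hderiv := partialDeriv_torusChar i (-k) x
    simp only [partialDeriv] at hderiv ⊢
    rw [fderiv_fun_mul (hf.differentiable x) (hchar.differentiable x)]
    simp only [_root_.add_apply, _root_.smul_apply, hderiv, smul_eq_mul]
    push_cast [Pi.neg_apply]
    ring
  have hzero := integral_partialDeriv_eq_zero (hf.mul hchar) i
  simp only [hleibniz] at hzero
  rwa [integral_sub
    (integrableOn_unitCube ((hf.partialDeriv i).mul hchar).contDiff.continuous)
    ((integrableOn_unitCube (hf.mul hchar).contDiff.continuous).const_mul _),
    integral_const_mul, sub_eq_zero] at hzero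

lemma cubeFourierCoeff_iterate_partialDeriv {f : (Fin n → ℝ) → ℂ} (hf : SmoothPeriodic f)
    (i : Fin n) (k : Fin n → ℤ) (m : ℕ) :
    cubeFourierCoeff ((partialDeriv i)^[m] f) k =
      (2 * Real.pi * Complex.I * k i) ^ m * cubeFourierCoeff f k := by
  induction m with
  | zero => simp
  | succ m ih =>
    rw [Function.iterate_succ_apply', cubeFourierCoeff_partialDeriv (hf.iterate_partialDeriv i m),
      ih, pow_succ']
    ring

lemma norm_cubeFourierCoeff_le (f : (Fin n → ℝ) → ℂ) (k : Fin n → ℤ) :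
    ‖cubeFourierCoeff f k‖ ≤ ∫ x in Set.Icc (0 : Fin n → ℝ) 1, ‖f x‖ :=
  (norm_integral_le_integral_norm _).trans_eq (by simp [norm_torusChar])

lemma norm_two_pi_I_mul_intCast (a : ℤ) :
    ‖(2 * Real.pi * Complex.I * a : ℂ)‖ = 2 * Real.pi * ‖a‖ := by
  simp [Int.norm_eq_abs, abs_of_pos Real.pi_pos]

lemma exists_norm_cubeFourierCoeff_le_mul_norm_inv_pow {f : (Fin n → ℝ) → ℂ}
    (hf : SmoothPeriodic f) (m : ℕ) :
    ∃ M : ℝ, 0 ≤ M ∧ ∀ k ≠ 0, ‖cubeFourierCoeff f k‖ ≤ M * ‖k‖⁻¹ ^ m := by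
  set I : Fin n → ℝ := fun i => ∫ x in Set.Icc (0 : Fin n → ℝ) 1, ‖(partialDeriv i)^[m] f x‖
  have hI (i : Fin n) : 0 ≤ I i := integral_nonneg fun _ => norm_nonneg _
  refine ⟨∑ i, I i, Finset.sum_nonneg fun i _ => hI i, fun k hk => ?_⟩
  have hk₀ : 0 < ‖k‖ := norm_pos_iff.2 hk
  obtain ⟨i₀, -⟩ := Function.ne_iff.1 hk
  have : Nonempty (Fin n) := ⟨i₀⟩
  obtain ⟨i, hi⟩ := exists_norm_apply_eq_norm k
  rw [inv_pow, ← div_eq_mul_inv, le_div_iff₀ (by positivity), mul_comm]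
  calc ‖k‖ ^ m * ‖cubeFourierCoeff f k‖
      ≤ (2 * Real.pi * ‖k‖) ^ m * ‖cubeFourierCoeff f k‖ := by
        gcongr
        nlinarith [Real.pi_gt_three]
    _ = ‖cubeFourierCoeff ((partialDeriv i)^[m] f) k‖ := by
        rw [cubeFourierCoeff_iterate_partialDeriv hf, norm_mul, norm_pow,
          norm_two_pi_I_mul_intCast, hi]
    _ ≤ I i := norm_cubeFourierCoeff_le _ k
    _ ≤ ∑ i, I i := Finset.single_le_sum (fun i _ => hI i) (Finset.mem_univ i)

lemma summable_norm_cubeFourierCoeff {f : (Fin n → ℝ) → ℂ} (hf : SmoothPeriodic f) :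
    Summable fun k => ‖cubeFourierCoeff f k‖ := by
  obtain ⟨M, -, hM⟩ := exists_norm_cubeFourierCoeff_le_mul_norm_inv_pow hf (n + 1)
  refine .of_norm_bounded_eventually
    ((summable_norm_inv_pow_of_card_lt (m := n + 1) (by simp)).mul_left M) ?_
  filter_upwards [show ({0} : Set (Fin n → ℤ))ᶜ ∈ Filter.cofinite by simp] with k hk
  rw [norm_norm]
  exact hM k hk

lemma mFourier_coe_eq_torusChar (k : Fin n → ℤ) (x : Fin n → ℝ) :
    UnitAddTorus.mFourier k (fun i => (x i : UnitAddCircle)) = torusChar k x := by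
  simp only [UnitAddTorus.mFourier, ContinuousMap.coe_mk, fourier_coe_apply, torusChar,
    ← Complex.exp_sum, Finset.mul_sum]
  refine congrArg Complex.exp (Finset.sum_congr rfl fun i _ => ?_)
  push_cast
  ring

lemma exists_continuousMap_unitAddTorus_lift {f : (Fin n → ℝ) → ℂ} (hf : SmoothPeriodic f) :
    ∃ F : C(UnitAddTorus (Fin n), ℂ), ∀ x, F (fun i => (x i : UnitAddCircle)) = f x := by
  let proj : (Fin n → ℝ) → UnitAddTorus (Fin n) := Pi.map fun _ => ((↑) : ℝ → UnitAddCircle)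
  have hproj : IsOpenQuotientMap proj := .piMap fun _ => QuotientAddGroup.isOpenQuotientMap_mk
  have hfactors : Function.FactorsThrough f proj := fun x y hxy => by
    have hint (i : Fin n) : ∃ m : ℤ, x i = y i + m := by
      have hi : ((x i - y i : ℝ) : UnitAddCircle) = 0 := by
        rw [AddCircle.coe_sub, sub_eq_zero]
        exact congrFun hxy i
      obtain ⟨m, hm⟩ := (AddCircle.coe_eq_zero_iff 1).1 hi
      exact ⟨m, by rw [← zsmul_one m, hm, add_sub_cancel]⟩
    choose m hm using hint
    rw [show x = y + fun i => (m i : ℝ) from funext hm, hf.periodic m]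
  have hquot : Topology.IsQuotientMap (⟨proj, hproj.continuous⟩ : C(_, _)) := hproj.isQuotientMap
  let f' : C(Fin n → ℝ, ℂ) := ⟨f, hf.contDiff.continuous⟩
  exact ⟨hquot.lift f' hfactors, fun x => DFunLike.congr_fun (hquot.lift_comp f' hfactors) x⟩

lemma mFourierCoeff_eq_cubeFourierCoeff {f : (Fin n → ℝ) → ℂ} {F : C(UnitAddTorus (Fin n), ℂ)}
    (hF : ∀ x, F (fun i => (x i : UnitAddCircle)) = f x) (k : Fin n → ℤ) :
    UnitAddTorus.mFourierCoeff F k = cubeFourierCoeff f k := by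
  have hset : {x : Fin n → ℝ | ∀ i, x i ∈ Set.Ioc ((0 : Fin n → ℝ) i) ((0 : Fin n → ℝ) i + 1)} =
      Set.univ.pi fun i => Set.Ioc ((0 : Fin n → ℝ) i) ((1 : Fin n → ℝ) i) := by
    ext x
    simp
  have hae : (Set.univ.pi fun i => Set.Ioc ((0 : Fin n → ℝ) i) ((1 : Fin n → ℝ) i)) =ᵐ[volume]
      Set.Icc (0 : Fin n → ℝ) 1 := Measure.univ_pi_Ioc_ae_eq_Icc (μ := fun _ => volume)
  rw [UnitAddTorus.mFourierCoeff_eq_integral F k 0, hset, setIntegral_congr_set hae]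
  simp only [cubeFourierCoeff, mFourier_coe_eq_torusChar, hF, smul_eq_mul, mul_comm]

lemma hasSum_cubeFourierCoeff_mul_torusChar {f : (Fin n → ℝ) → ℂ} (hf : SmoothPeriodic f)
    (x : Fin n → ℝ) : HasSum (fun k => cubeFourierCoeff f k * torusChar k x) (f x) := by
  obtain ⟨F, hF⟩ := exists_continuousMap_unitAddTorus_lift hf
  have hcoeff := mFourierCoeff_eq_cubeFourierCoeff hF
  have hsummable : Summable (UnitAddTorus.mFourierCoeff F) := by
    rw [funext hcoeff]
    exact (summable_norm_cubeFourierCoeff hf).of_norm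
  simpa only [mFourier_coe_eq_torusChar, hF, hcoeff, smul_eq_mul] using
    UnitAddTorus.hasSum_mFourier_series_apply_of_summable hsummable fun i => (x i : UnitAddCircle)

lemma enorm_integral_mul_le {f g : (Fin n → ℝ) → ℂ} (hf : SmoothPeriodic f) (hg : Continuous g) :
    ‖∫ x in Set.Icc (0 : Fin n → ℝ) 1, f x * g x‖ₑ ≤
      ∑' k, ‖cubeFourierCoeff f k‖ₑ * ‖cubeFourierCoeff g (-k)‖ₑ := by
  have hcont (k : Fin n → ℤ) : Continuous fun x => cubeFourierCoeff f k * torusChar k x * g x :=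
    (continuous_const.mul (smoothPeriodic_torusChar k).contDiff.continuous).mul hg
  have hsum := hasSum_integral_of_summable_integral_norm
    (μ := volume.restrict (Set.Icc (0 : Fin n → ℝ) 1))
    (fun k => integrableOn_unitCube (hcont k)) (by
      simp only [norm_mul, norm_torusChar, mul_one, integral_const_mul]
      exact (summable_norm_cubeFourierCoeff hf).mul_right _)
  have hinv (x : Fin n → ℝ) : ∑' k, cubeFourierCoeff f k * torusChar k x * g x = f x * g x :=
    ((hasSum_cubeFourierCoeff_mul_torusChar hf x).mul_right (g x)).tsum_eq
  simp only [hinv] at hsum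
  rw [← hsum.tsum_eq]
  refine enorm_tsum_le_tsum_enorm.trans_eq (tsum_congr fun k => ?_)
  simp only [mul_assoc, integral_const_mul, enorm_mul, cubeFourierCoeff, neg_neg, mul_comm (g _)]

lemma enorm_integral_mul_mul_le {f g h : (Fin n → ℝ) → ℂ} (hf : SmoothPeriodic f)
    (hg : SmoothPeriodic g) (hh : Continuous h) :
    ‖∫ x in Set.Icc (0 : Fin n → ℝ) 1, f x * g x * h x‖ₑ ≤
      ∑' k, ∑' l, ‖cubeFourierCoeff f k‖ₑ * ‖cubeFourierCoeff g l‖ₑ *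
        ‖cubeFourierCoeff h (-(k + l))‖ₑ := by
  have hgh (k : Fin n → ℤ) : ‖cubeFourierCoeff (fun x => g x * h x) (-k)‖ₑ ≤
      ∑' l, ‖cubeFourierCoeff g l‖ₑ * ‖cubeFourierCoeff h (-(k + l))‖ₑ := by
    have hcoeff : cubeFourierCoeff (fun x => g x * h x) (-k) =
        ∫ x in Set.Icc (0 : Fin n → ℝ) 1, g x * (h x * torusChar k x) := by
      simp only [cubeFourierCoeff, neg_neg, mul_assoc]
    have hshift (l : Fin n → ℤ) : cubeFourierCoeff (fun x => h x * torusChar k x) (-l) =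
        cubeFourierCoeff h (-(k + l)) := by
      simp only [cubeFourierCoeff, neg_neg, torusChar_add, mul_assoc]
    rw [hcoeff]
    refine (enorm_integral_mul_le (g := fun x => h x * torusChar k x) hg
      (hh.mul (smoothPeriodic_torusChar k).contDiff.continuous)).trans_eq ?_
    simp only [hshift]
  simp only [mul_assoc, ENNReal.tsum_mul_left]
  refine (enorm_integral_mul_le hf (hg.contDiff.continuous.mul hh)).trans ?_
  gcongr with k
  exact hgh k

end Fourier

section VectorFields

variable {u v w : (Fin 3 → ℝ) → (Fin 3 → ℝ)}

lemma IsSmoothTorusVF.smoothPeriodic (hu : IsSmoothTorusVF u) (j : Fin 3) :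
    SmoothPeriodic fun x => (u x j : ℂ) where
  contDiff := Complex.ofRealCLM.contDiff.comp ((contDiff_apply ℝ ℝ j).comp hu.1)
  periodic m x := by simp only [hu.2.1 x m]

lemma IsSmoothTorusVF.ofReal_fderiv_apply (hv : IsSmoothTorusVF v) (i j : Fin 3)
    (x : Fin 3 → ℝ) : ((fderiv ℝ v x (Pi.single i 1) j : ℝ) : ℂ) =
      partialDeriv i (fun y => (v y j : ℂ)) x := by
  have hv' : HasFDerivAt v (fderiv ℝ v x) x := (hv.1.differentiable (by simp) x).hasFDerivAt
  have hcomp : HasFDerivAt (fun y => (v y j : ℂ)) _ x :=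
    Complex.ofRealCLM.hasFDerivAt.comp x (hasFDerivAt_pi'.1 hv' j)
  rw [partialDeriv, hcomp.fderiv]
  simp

lemma fourierCoeffVF_eq_cubeFourierCoeff (u : (Fin 3 → ℝ) → (Fin 3 → ℝ)) (k : Fin 3 → ℤ)
    (j : Fin 3) : fourierCoeffVF u k j = cubeFourierCoeff (fun x => (u x j : ℂ)) k := by
  simp [fourierCoeffVF, cubeFourierCoeff, torusChar]

lemma fcNormSq_nonneg (u : (Fin 3 → ℝ) → (Fin 3 → ℝ)) (k : Fin 3 → ℤ) : 0 ≤ fcNormSq u k :=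
  Finset.sum_nonneg fun _ _ => Complex.normSq_nonneg _

/-- The modulus `|û(k)|` of the Fourier coefficient, as an extended nonnegative real. -/
noncomputable def fourierAmplitude (u : (Fin 3 → ℝ) → (Fin 3 → ℝ)) (k : Fin 3 → ℤ) : ℝ≥0∞ :=
  ENNReal.ofReal √(fcNormSq u k)

lemma fourierAmplitude_sq (u : (Fin 3 → ℝ) → (Fin 3 → ℝ)) (k : Fin 3 → ℤ) :
    fourierAmplitude u k ^ 2 = ENNReal.ofReal (fcNormSq u k) := by
  rw [fourierAmplitude, ← ENNReal.ofReal_pow (Real.sqrt_nonneg _),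
    Real.sq_sqrt (fcNormSq_nonneg u k)]

lemma enorm_cubeFourierCoeff_le_fourierAmplitude (u : (Fin 3 → ℝ) → (Fin 3 → ℝ))
    (k : Fin 3 → ℤ) (j : Fin 3) :
    ‖cubeFourierCoeff (fun x => (u x j : ℂ)) k‖ₑ ≤ fourierAmplitude u k := by
  rw [← fourierCoeffVF_eq_cubeFourierCoeff, ← ofReal_norm]
  refine ENNReal.ofReal_le_ofReal (Real.le_sqrt_of_sq_le ?_)
  rw [Complex.sq_norm]
  exact Finset.single_le_sum (f := fun j => Complex.normSq (fourierCoeffVF u k j))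
    (fun _ _ => Complex.normSq_nonneg _) (Finset.mem_univ j)

lemma IsSmoothTorusVF.fourierAmplitude_zero (hu : IsSmoothTorusVF u) :
    fourierAmplitude u 0 = 0 := by
  have hint : IntegrableOn u (Set.Icc (0 : Fin 3 → ℝ) 1) :=
    hu.1.continuous.continuousOn.integrableOn_compact isCompact_Icc
  have hmean (j : Fin 3) : ∫ x in Set.Icc (0 : Fin 3 → ℝ) 1, u x j = 0 := by
    have hproj := (ContinuousLinearMap.proj (R := ℝ) (φ := fun _ : Fin 3 => ℝ) j).integral_comp_comm
      hint
    rwa [show ∫ x in Set.Icc (0 : Fin 3 → ℝ) 1, u x = 0 from hu.2.2, map_zero] at hproj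
  have hcoeff (j : Fin 3) : fourierCoeffVF u 0 j = 0 := by
    simp [fourierCoeffVF, integral_complex_ofReal, hmean]
  simp [fourierAmplitude, fcNormSq, hcoeff]

/-- The squared frequency `|2πk|²`, so that `specWeight s k = freqSq k ^ s`. -/
noncomputable def freqSq (k : Fin 3 → ℤ) : ℝ := (2 * Real.pi) ^ 2 * ∑ i, ((k i : ℝ)) ^ 2

lemma norm_sq_le_freqSq (k : Fin 3 → ℤ) : ‖k‖ ^ 2 ≤ freqSq k := by
  obtain ⟨i, hi⟩ := exists_norm_apply_eq_norm k
  calc ‖k‖ ^ 2 = (k i : ℝ) ^ 2 := by rw [← hi, Int.norm_eq_abs, sq_abs]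
    _ ≤ ∑ i, ((k i : ℝ)) ^ 2 :=
        Finset.single_le_sum (f := fun i => ((k i : ℝ)) ^ 2) (fun _ _ => sq_nonneg _)
          (Finset.mem_univ i)
    _ ≤ freqSq k := le_mul_of_one_le_left (by positivity) (by nlinarith [Real.pi_gt_three])

lemma freqSq_le (k : Fin 3 → ℤ) : freqSq k ≤ 12 * Real.pi ^ 2 * ‖k‖ ^ 2 := by
  have hcoord (i : Fin 3) : (k i : ℝ) ^ 2 ≤ ‖k‖ ^ 2 := by
    rw [← sq_abs, ← Int.norm_eq_abs]
    gcongr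
    exact norm_le_pi_norm k i
  calc freqSq k ≤ (2 * Real.pi) ^ 2 * ∑ _i : Fin 3, ‖k‖ ^ 2 :=
        mul_le_mul_of_nonneg_left (Finset.sum_le_sum fun i _ => hcoord i) (by positivity)
    _ = 12 * Real.pi ^ 2 * ‖k‖ ^ 2 := by
        simp only [Finset.sum_const, Finset.card_univ, Fintype.card_fin, nsmul_eq_mul,
          Nat.cast_ofNat]
        ring

lemma one_le_freqSq {k : Fin 3 → ℤ} (hk : k ≠ 0) : 1 ≤ freqSq k :=
  (one_le_pow₀ (one_le_norm_of_ne_zero hk)).trans (norm_sq_le_freqSq k)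

lemma specWeight_nonneg (s : ℝ) (k : Fin 3 → ℤ) : 0 ≤ specWeight s k :=
  Real.rpow_nonneg (by positivity) s

lemma specWeight_mono {k : Fin 3 → ℤ} (hk : k ≠ 0) {s t : ℝ} (hst : s ≤ t) :
    specWeight s k ≤ specWeight t k :=
  Real.rpow_le_rpow_of_exponent_le (one_le_freqSq hk) hst

lemma hsNorm_summand_nonneg (s : ℝ) (u : (Fin 3 → ℝ) → (Fin 3 → ℝ)) (k : Fin 3 → ℤ) :
    0 ≤ if k = 0 then 0 else specWeight s k * fcNormSq u k := by
  split_ifs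
  exacts [le_rfl, mul_nonneg (specWeight_nonneg s k) (fcNormSq_nonneg u k)]

lemma IsSmoothTorusVF.exists_fcNormSq_le (hu : IsSmoothTorusVF u) (m : ℕ) :
    ∃ M : ℝ, 0 ≤ M ∧ ∀ k ≠ 0, fcNormSq u k ≤ M * (‖k‖⁻¹ ^ m) ^ 2 := by
  choose M _ hM using fun j =>
    exists_norm_cubeFourierCoeff_le_mul_norm_inv_pow (hu.smoothPeriodic j) m
  refine ⟨∑ j, M j ^ 2, by positivity, fun k hk => ?_⟩
  rw [fcNormSq, Finset.sum_mul]
  gcongr with j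
  rw [← Complex.sq_norm, fourierCoeffVF_eq_cubeFourierCoeff, ← mul_pow]
  gcongr
  exact hM j k hk

lemma IsSmoothTorusVF.summable_hsNorm (hu : IsSmoothTorusVF u) (s : ℝ) :
    Summable fun k : Fin 3 → ℤ => if k = 0 then 0 else specWeight s k * fcNormSq u k := by
  set N := ⌈s⌉₊
  obtain ⟨M, hM₀, hM⟩ := hu.exists_fcNormSq_le (N + 2)
  refine .of_nonneg_of_le (hsNorm_summand_nonneg s u) (fun k => ?_)
    ((summable_norm_inv_pow_of_card_lt (m := 4) (by simp)).mul_left ((12 * Real.pi ^ 2) ^ N * M))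
  split_ifs with hk
  · positivity
  have hweight : specWeight s k ≤ (12 * Real.pi ^ 2 * ‖k‖ ^ 2) ^ N := calc
    specWeight s k ≤ specWeight N k := specWeight_mono hk (Nat.le_ceil s)
    _ = freqSq k ^ N := Real.rpow_natCast _ _
    _ ≤ _ := by
      gcongr
      exacts [zero_le_one.trans (one_le_freqSq hk), freqSq_le k]
  calc specWeight s k * fcNormSq u k
      ≤ (12 * Real.pi ^ 2 * ‖k‖ ^ 2) ^ N * (M * (‖k‖⁻¹ ^ (N + 2)) ^ 2) :=
        mul_le_mul hweight (hM k hk) (fcNormSq_nonneg u k) (by positivity)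
    _ = (12 * Real.pi ^ 2) ^ N * M * ‖k‖⁻¹ ^ 4 * (‖k‖ * ‖k‖⁻¹) ^ (2 * N) := by ring
    _ = (12 * Real.pi ^ 2) ^ N * M * ‖k‖⁻¹ ^ 4 := by
        rw [mul_inv_cancel₀ (norm_ne_zero_iff.2 hk), one_pow, mul_one]

lemma hsNorm_nonneg (s : ℝ) (u : (Fin 3 → ℝ) → (Fin 3 → ℝ)) : 0 ≤ hsNorm s u :=
  Real.sqrt_nonneg _

lemma IsSmoothTorusVF.hsNorm_mono (hu : IsSmoothTorusVF u) {s t : ℝ} (hst : s ≤ t) :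
    hsNorm s u ≤ hsNorm t u := by
  refine Real.sqrt_le_sqrt <|
    (hu.summable_hsNorm s).tsum_le_tsum (fun k => ?_) (hu.summable_hsNorm t)
  split_ifs with hk
  · exact le_rfl
  · exact mul_le_mul_of_nonneg_right (specWeight_mono hk hst) (fcNormSq_nonneg u k)

lemma enorm_rpow_sq_le_specWeight {k : Fin 3 → ℤ} (hk : k ≠ 0) (s : ℝ) :
    (‖k‖ₑ ^ s) ^ 2 ≤
      ENNReal.ofReal (12 * Real.pi ^ 2) ^ |s| * ENNReal.ofReal (specWeight s k) := by
  have hfreq₀ : 0 < freqSq k := zero_lt_one.trans_le (one_le_freqSq hk)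
  have hfreq : ENNReal.ofReal (specWeight s k) = ENNReal.ofReal (freqSq k) ^ s :=
    (ENNReal.ofReal_rpow_of_pos hfreq₀).symm
  have hlower : ‖k‖ₑ ^ 2 ≤ ENNReal.ofReal (12 * Real.pi ^ 2) * ENNReal.ofReal (freqSq k) := by
    rw [← ofReal_norm, ← ENNReal.ofReal_pow (norm_nonneg k), ← ENNReal.ofReal_mul (by positivity)]
    refine ENNReal.ofReal_le_ofReal ((norm_sq_le_freqSq k).trans ?_)
    exact le_mul_of_one_le_left hfreq₀.le (by nlinarith [Real.pi_gt_three])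
  have hupper : ENNReal.ofReal (freqSq k) ≤ ENNReal.ofReal (12 * Real.pi ^ 2) * ‖k‖ₑ ^ 2 := by
    rw [← ofReal_norm, ← ENNReal.ofReal_pow (norm_nonneg k), ← ENNReal.ofReal_mul (by positivity)]
    exact ENNReal.ofReal_le_ofReal (freqSq_le k)
  have hcomm : (‖k‖ₑ ^ s) ^ 2 = (‖k‖ₑ ^ 2) ^ s := by
    rw [← ENNReal.rpow_two, ← ENNReal.rpow_two, ← ENNReal.rpow_mul, ← ENNReal.rpow_mul, mul_comm]
  rw [hcomm, hfreq]
  exact rpow_le_mul_rpow_of_comparable (by simp) ENNReal.ofReal_ne_top hlower hupper s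

lemma IsSmoothTorusVF.seqSobolevNorm_fourierAmplitude_le (hu : IsSmoothTorusVF u) (s : ℝ) :
    seqSobolevNorm s (fourierAmplitude u) ≤
      (ENNReal.ofReal (12 * Real.pi ^ 2) ^ |s|) ^ (1 / 2 : ℝ) * ENNReal.ofReal (hsNorm s u) := by
  rw [hsNorm, Real.sqrt_eq_rpow, ← ENNReal.ofReal_rpow_of_nonneg
    (tsum_nonneg (hsNorm_summand_nonneg s u)) (by norm_num),
    ENNReal.ofReal_tsum_of_nonneg (hsNorm_summand_nonneg s u) (hu.summable_hsNorm s),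
    ← ENNReal.mul_rpow_of_nonneg _ _ (by norm_num), ← ENNReal.tsum_mul_left, seqSobolevNorm,
    ell2Norm]
  gcongr with k
  split_ifs with hk
  · simp [hk, hu.fourierAmplitude_zero]
  · rw [mul_pow, fourierAmplitude_sq, ENNReal.ofReal_mul (specWeight_nonneg s k), ← mul_assoc]
    gcongr
    exact enorm_rpow_sq_le_specWeight hk s

lemma enorm_cubeFourierCoeff_partialDeriv_le (hv : IsSmoothTorusVF v) (i j : Fin 3)
    (l : Fin 3 → ℤ) :
    ‖cubeFourierCoeff (partialDeriv i fun x => (v x j : ℂ)) l‖ₑ ≤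
      ENNReal.ofReal (2 * Real.pi) * (‖l‖ₑ * fourierAmplitude v l) := by
  rw [cubeFourierCoeff_partialDeriv (hv.smoothPeriodic j), enorm_mul, ← mul_assoc,
    ← ofReal_norm (2 * Real.pi * Complex.I * l i : ℂ), norm_two_pi_I_mul_intCast,
    ENNReal.ofReal_mul (by positivity), ofReal_norm]
  gcongr
  · exact enorm_le_iff_norm_le.2 (norm_le_pi_norm l i)
  · exact enorm_cubeFourierCoeff_le_fourierAmplitude v l j

lemma enorm_integral_mul_fderiv_mul_le (hu : IsSmoothTorusVF u) (hv : IsSmoothTorusVF v)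
    (hw : IsSmoothTorusVF w) (i j : Fin 3) :
    ‖∫ x in Set.Icc (0 : Fin 3 → ℝ) 1, u x i * fderiv ℝ v x (Pi.single i 1) j * w x j‖ₑ ≤
      ENNReal.ofReal (2 * Real.pi) * ∑' k, ∑' l, fourierAmplitude u k *
        (‖l‖ₑ * fourierAmplitude v l) * fourierAmplitude w (-(k + l)) := by
  have hcomplex : ((∫ x in Set.Icc (0 : Fin 3 → ℝ) 1,
        u x i * fderiv ℝ v x (Pi.single i 1) j * w x j : ℝ) : ℂ) =
      ∫ x in Set.Icc (0 : Fin 3 → ℝ) 1,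
        (u x i : ℂ) * partialDeriv i (fun y => (v y j : ℂ)) x * (w x j : ℂ) := by
    simp only [← integral_complex_ofReal, Complex.ofReal_mul, hv.ofReal_fderiv_apply]
  rw [← enorm_norm, ← Complex.norm_real, enorm_norm, hcomplex]
  refine (enorm_integral_mul_mul_le (hu.smoothPeriodic i) ((hv.smoothPeriodic j).partialDeriv i)
    (hw.smoothPeriodic j).contDiff.continuous).trans ?_
  simp only [← ENNReal.tsum_mul_left]
  refine ENNReal.tsum_le_tsum fun k => ENNReal.tsum_le_tsum fun l => ?_
  calc _ ≤ fourierAmplitude u k * (ENNReal.ofReal (2 * Real.pi) *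
          (‖l‖ₑ * fourierAmplitude v l)) * fourierAmplitude w (-(k + l)) := by
        gcongr
        · exact enorm_cubeFourierCoeff_le_fourierAmplitude u k i
        · exact enorm_cubeFourierCoeff_partialDeriv_le hv i j l
        · exact enorm_cubeFourierCoeff_le_fourierAmplitude w _ j
    _ = _ := by ring

lemma enorm_bform_le (hu : IsSmoothTorusVF u) (hv : IsSmoothTorusVF v) (hw : IsSmoothTorusVF w) :
    ‖bform u v w‖ₑ ≤ 9 * (ENNReal.ofReal (2 * Real.pi) * ∑' k, ∑' l, fourierAmplitude u k *
      (‖l‖ₑ * fourierAmplitude v l) * fourierAmplitude w (-(k + l))) := by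
  set T := ENNReal.ofReal (2 * Real.pi) * ∑' k, ∑' l, fourierAmplitude u k *
    (‖l‖ₑ * fourierAmplitude v l) * fourierAmplitude w (-(k + l))
  calc ‖bform u v w‖ₑ
      ≤ ∑ i, ∑ j, ‖∫ x in Set.Icc (0 : Fin 3 → ℝ) 1,
          u x i * fderiv ℝ v x (Pi.single i 1) j * w x j‖ₑ :=
        (enorm_sum_le _ _).trans (Finset.sum_le_sum fun i _ => enorm_sum_le _ _)
    _ ≤ ∑ _i : Fin 3, ∑ _j : Fin 3, T := Finset.sum_le_sum fun i _ => Finset.sum_le_sum fun j _ =>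
        enorm_integral_mul_fderiv_mul_le hu hv hw i j
    _ = 9 * T := by
        simp only [Finset.sum_const, Finset.card_univ, Fintype.card_fin, nsmul_eq_mul]
        rw [← mul_assoc]
        norm_num

lemma exists_enorm_bform_le {r s t : ℝ} (hr : r < 3 / 2) (hs : s < 5 / 2) (ht : t < 3 / 2)
    (hrst : 5 / 2 ≤ r + s + t) :
    ∃ C : ℝ≥0∞, C ≠ ∞ ∧ ∀ u v w : (Fin 3 → ℝ) → (Fin 3 → ℝ),
      IsSmoothTorusVF u → IsSmoothTorusVF v → IsSmoothTorusVF w →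
      ‖bform u v w‖ₑ ≤ C * (ENNReal.ofReal (hsNorm r u) * ENNReal.ofReal (hsNorm s v) *
        ENNReal.ofReal (hsNorm t w)) := by
  obtain ⟨C, hC, hsobolev⟩ := exists_tsum_mul_mul_le_seqSobolevNorm (ι := Fin 3) (α := r)
    (β := s - 1) (γ := t) (by norm_num; linarith) (by norm_num; linarith) (by norm_num; linarith)
    (by norm_num; linarith)
  let κ (q : ℝ) : ℝ≥0∞ := (ENNReal.ofReal (12 * Real.pi ^ 2) ^ |q|) ^ (1 / 2 : ℝ)
  refine ⟨9 * (ENNReal.ofReal (2 * Real.pi) * (C * (κ r * κ s * κ t))), by finiteness,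
    fun u v w hu hv hw => ?_⟩
  calc ‖bform u v w‖ₑ
      ≤ 9 * (ENNReal.ofReal (2 * Real.pi) * ∑' k, ∑' l, fourierAmplitude u k *
          (‖l‖ₑ * fourierAmplitude v l) * fourierAmplitude w (-(k + l))) :=
        enorm_bform_le hu hv hw
    _ ≤ 9 * (ENNReal.ofReal (2 * Real.pi) * (C * (seqSobolevNorm r (fourierAmplitude u) *
          seqSobolevNorm s (fourierAmplitude v) * seqSobolevNorm t (fourierAmplitude w)))) := by
        rw [← seqSobolevNorm_enorm_mul hv.fourierAmplitude_zero]
        gcongr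
        exact hsobolev (fourierAmplitude u) (fun l => ‖l‖ₑ * fourierAmplitude v l)
          (fourierAmplitude w) hu.fourierAmplitude_zero (by simp) hw.fourierAmplitude_zero
    _ ≤ 9 * (ENNReal.ofReal (2 * Real.pi) * (C * ((κ r * ENNReal.ofReal (hsNorm r u)) *
          (κ s * ENNReal.ofReal (hsNorm s v)) * (κ t * ENNReal.ofReal (hsNorm t w))))) := by
        gcongr
        exacts [hu.seqSobolevNorm_fourierAmplitude_le r, hv.seqSobolevNorm_fourierAmplitude_le s,
          hw.seqSobolevNorm_fourierAmplitude_le t]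
    _ = _ := by ring

end VectorFields

theorem bform_estimate_r_r_r_epsilon_general {r s t : ℝ} (hr : r < 3 / 2) (hs : s < 5 / 2)
    (ht : t < 3 / 2) (hrst : 5 / 2 ≤ r + s + t) :
    ∃ C : ℝ, 0 < C ∧ ∀ u v w : (Fin 3 → ℝ) → (Fin 3 → ℝ),
      IsSmoothTorusVF u → IsSmoothTorusVF v → IsSmoothTorusVF w →
      |bform u v w| ≤ C * hsNorm r u * hsNorm s v * hsNorm t w := by
  obtain ⟨C, hC, hbound⟩ := exists_enorm_bform_le hr hs ht hrst
  refine ⟨C.toReal + 1, by positivity, fun u v w hu hv hw => ?_⟩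
  have hr₀ := hsNorm_nonneg r u
  have hs₀ := hsNorm_nonneg s v
  have ht₀ := hsNorm_nonneg t w
  have hreal : |bform u v w| ≤ C.toReal * (hsNorm r u * hsNorm s v * hsNorm t w) := by
    rw [← ENNReal.ofReal_le_ofReal_iff (by positivity), ENNReal.ofReal_mul (by positivity),
      ENNReal.ofReal_mul (by positivity), ENNReal.ofReal_mul hr₀, ENNReal.ofReal_toReal hC,
      ← Real.enorm_eq_ofReal_abs]
    exact hbound u v w hu hv hw
  calc |bform u v w| ≤ C.toReal * (hsNorm r u * hsNorm s v * hsNorm t w) := hreal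
    _ ≤ (C.toReal + 1) * (hsNorm r u * hsNorm s v * hsNorm t w) := by
        gcongr
        exact le_add_of_nonneg_right zero_le_one
    _ = (C.toReal + 1) * hsNorm r u * hsNorm s v * hsNorm t w := by ring

theorem bform_estimate_r_r_r_epsilon :
    ∀ s : ℝ, 5/6 < s → s ≤ 5/4 →
    ∀ ε : ℝ, 0 < ε → ε ≤ (6*s - 5)/2 →
    ∃ C : ℝ, 0 < C ∧
      ∀ u v w : (Fin 3 → ℝ) → (Fin 3 → ℝ),
        IsSmoothTorusVF u → IsDivFree u →
        IsSmoothTorusVF v → IsDivFree v →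
        IsSmoothTorusVF w → IsDivFree w →
        |bform u v w| ≤ C * hsNorm s u * hsNorm s v * hsNorm (s - ε) w ∧
        |bform u v w| ≤ C * hsNorm s u * hsNorm s v * hsNorm s w := by
  intro s _ hs₁ ε hε₀ hε₁
  obtain ⟨C, hC, hbound⟩ := bform_estimate_r_r_r_epsilon_general (r := s) (s := s) (t := s - ε)
    (by linarith) (by linarith) (by linarith) (by linarith)
  refine ⟨C, hC, fun u v w hu _ hv _ hw _ =>
    ⟨hbound u v w hu hv hw, (hbound u v w hu hv hw).trans ?_⟩⟩
  have := hsNorm_nonneg s u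
  have := hsNorm_nonneg s v
  gcongr
  exact hw.hsNorm_mono (by linarith)
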